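/- arXiv:1105.4962 — 5 statements merged into one kernel-verified Lean document; each statement's English description precedes it below -/
import Mathlib

section
/- Let n ≥ 1, let λ : Fin n → ℝ, and let h : Fin n → Fin n → Fin n → ℝ be fully symmetric, i.e. h i j k is invariant under all permutations of (i,j,k). Define Ξ = Σ_{i,j,k} (h i j k)²·(λ_k² − 2 λ_i λ_j), S = Σ_i λ_i², and |h|² = Σ_{i,j,k} (h i j k)². Then 3Ξ ≤ ((√17 + 1)/2)·S·|h|². -/
/-!
A cyclic relabelling of the indices in `Ξ` replaces the coefficient of `h i j k ^ 2` in `3 * Ξ` by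
the symmetric form `a² + b² + c² - 2(ab + bc + ca)` in `a = λ i`, `b = λ j`, `c = λ k`. For distinct
indices this form is at most `2(a² + b² + c²) ≤ 2S`. In the extremal case two indices coincide, so
that only `a² + b² ≤ S` is available: the form becomes `b² - 4ab`, whose largest eigenvalue is
`(√17 + 1) / 2`, the positive root of `C² = C + 4`.
-/

section CyclicSum

variable {ι M : Type*} [Fintype ι] [AddCommMonoid M]

theorem three_nsmul_sum_eq_sum_cyclic (f : ι → ι → ι → M) :
    3 • ∑ i, ∑ j, ∑ k, f i j k = ∑ i, ∑ j, ∑ k, (f i j k + f j k i + f k i j) := by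
  have hrotate : ∑ i, ∑ j, ∑ k, f j k i = ∑ i, ∑ j, ∑ k, f i j k := Finset.sum_comm_cycle.symm
  have hrotate' : ∑ i, ∑ j, ∑ k, f k i j = ∑ i, ∑ j, ∑ k, f i j k := Finset.sum_comm_cycle
  simp only [Finset.sum_add_distrib, hrotate, hrotate', succ_nsmul, zero_nsmul, zero_add]

end CyclicSum

section CyclicCoeff

/-- The coefficient of `h i j k ^ 2` in `3 * Ξ` after symmetrization over cyclic permutations of
the indices, as a quadratic form in the principal curvatures `a = λ i`, `b = λ j`, `c = λ k`. -/
def cyclicCoeff {R : Type*} [CommRing R] (a b c : R) : R :=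
  a ^ 2 + b ^ 2 + c ^ 2 - 2 * (a * b + b * c + c * a)

variable {ι R : Type*} [CommRing R] [LinearOrder R] [IsStrictOrderedRing R] {C : R}

theorem sq_sub_four_mul_le (hC : 0 < C) (hC_sq : C + 4 ≤ C ^ 2) (a b : R) :
    b ^ 2 - 4 * (a * b) ≤ C * (a ^ 2 + b ^ 2) := by
  refine le_of_mul_le_mul_left ?_ hC
  calc C * (b ^ 2 - 4 * (a * b))
      = C ^ 2 * a ^ 2 + (C + 4) * b ^ 2 - (C * a + 2 * b) ^ 2 := by ring
    _ ≤ C ^ 2 * a ^ 2 + (C + 4) * b ^ 2 := sub_le_self _ (sq_nonneg _)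
    _ ≤ C ^ 2 * a ^ 2 + C ^ 2 * b ^ 2 := by gcongr
    _ = C * (C * (a ^ 2 + b ^ 2)) := by ring

variable [Fintype ι]

theorem sq_sub_four_mul_le_mul_sum_sq (hC : 0 < C) (hC_sq : C + 4 ≤ C ^ 2) (x : ι → R) (i j : ι) :
    x j ^ 2 - 4 * (x i * x j) ≤ C * ∑ l, x l ^ 2 := by
  obtain rfl | hij := eq_or_ne i j
  · calc x i ^ 2 - 4 * (x i * x i) = -(3 * x i ^ 2) := by ring
      _ ≤ 0 := neg_nonpos.2 (by positivity)
      _ ≤ C * ∑ l, x l ^ 2 := by positivity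
  · calc x j ^ 2 - 4 * (x i * x j) ≤ C * (x i ^ 2 + x j ^ 2) := sq_sub_four_mul_le hC hC_sq _ _
      _ ≤ C * ∑ l, x l ^ 2 := by
        gcongr
        exact Finset.add_le_sum (fun l _ => sq_nonneg (x l)) (Finset.mem_univ i)
          (Finset.mem_univ j) hij

theorem cyclicCoeff_le_two_mul_sum_sq (x : ι → R) {i j k : ι} (hij : i ≠ j) (hik : i ≠ k)
    (hjk : j ≠ k) :
    cyclicCoeff (x i) (x j) (x k) ≤ 2 * ∑ l, x l ^ 2 := by
  classical
  have hsum : x i ^ 2 + x j ^ 2 + x k ^ 2 ≤ ∑ l, x l ^ 2 := by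
    calc x i ^ 2 + x j ^ 2 + x k ^ 2 = ∑ l ∈ {i, j, k}, x l ^ 2 := by
          rw [Finset.sum_insert (by simp [hij, hik]), Finset.sum_pair hjk, add_assoc]
      _ ≤ ∑ l, x l ^ 2 := Finset.sum_le_univ_sum_of_nonneg fun l => sq_nonneg (x l)
  calc cyclicCoeff (x i) (x j) (x k)
      = 2 * (x i ^ 2 + x j ^ 2 + x k ^ 2) - (x i + x j + x k) ^ 2 := by rw [cyclicCoeff]; ring
    _ ≤ 2 * (x i ^ 2 + x j ^ 2 + x k ^ 2) := sub_le_self _ (sq_nonneg _)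
    _ ≤ 2 * ∑ l, x l ^ 2 := by gcongr

theorem cyclicCoeff_le_mul_sum_sq (hC : 0 < C) (hC_sq : C + 4 ≤ C ^ 2) (x : ι → R)
    (i j k : ι) : cyclicCoeff (x i) (x j) (x k) ≤ C * ∑ l, x l ^ 2 := by
  have hcoincide := sq_sub_four_mul_le_mul_sum_sq hC hC_sq x
  obtain rfl | hij := eq_or_ne i j
  · calc _ = x k ^ 2 - 4 * (x i * x k) := by rw [cyclicCoeff]; ring
      _ ≤ C * ∑ l, x l ^ 2 := hcoincide i k
  obtain rfl | hik := eq_or_ne i k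
  · calc _ = x j ^ 2 - 4 * (x i * x j) := by rw [cyclicCoeff]; ring
      _ ≤ C * ∑ l, x l ^ 2 := hcoincide i j
  obtain rfl | hjk := eq_or_ne j k
  · calc _ = x i ^ 2 - 4 * (x j * x i) := by rw [cyclicCoeff]; ring
      _ ≤ C * ∑ l, x l ^ 2 := hcoincide j i
  have hC_two : 2 ≤ C := by nlinarith
  calc _ ≤ 2 * ∑ l, x l ^ 2 := cyclicCoeff_le_two_mul_sum_sq x hij hik hjk
    _ ≤ C * ∑ l, x l ^ 2 := by gcongr

theorem xi_pointwise_estimate_general (hC : 0 < C) (hC_sq : C + 4 ≤ C ^ 2) (x : ι → R)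
    {w : ι → ι → ι → R} (hw : ∀ i j k, 0 ≤ w i j k) (hw_cyclic : ∀ i j k, w j k i = w i j k) :
    3 * ∑ i, ∑ j, ∑ k, w i j k * (x k ^ 2 - 2 * x i * x j) ≤
      C * (∑ i, x i ^ 2) * ∑ i, ∑ j, ∑ k, w i j k := by
  let f i j k := w i j k * (x k ^ 2 - 2 * x i * x j)
  have hf (i j k : ι) : f i j k + f j k i + f k i j =
      w i j k * cyclicCoeff (x i) (x j) (x k) := by
    simp only [f, cyclicCoeff, hw_cyclic i j k, ← hw_cyclic k i j]
    ring
  calc 3 * ∑ i, ∑ j, ∑ k, f i j k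
      = ∑ i, ∑ j, ∑ k, w i j k * cyclicCoeff (x i) (x j) (x k) := by
        simp only [← hf, ← three_nsmul_sum_eq_sum_cyclic, nsmul_eq_mul, Nat.cast_ofNat]
    _ ≤ ∑ i, ∑ j, ∑ k, w i j k * (C * ∑ l, x l ^ 2) := by
        gcongr with i _ j _ k _
        · exact hw i j k
        · exact cyclicCoeff_le_mul_sum_sq hC hC_sq x i j k
    _ = C * (∑ i, x i ^ 2) * ∑ i, ∑ j, ∑ k, w i j k := by
        rw [mul_comm (C * _)]
        simp only [Finset.sum_mul]

end CyclicCoeff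

theorem sq_sqrt_seventeen_add_one_div_two :
    ((Real.sqrt 17 + 1) / 2) ^ 2 = (Real.sqrt 17 + 1) / 2 + 4 := by
  linear_combination Real.sq_sqrt (by norm_num : (0 : ℝ) ≤ 17) / 4

theorem xi_pointwise_estimate (n : ℕ) (hn : 1 ≤ n) (lam : Fin n → ℝ)
    (h : Fin n → Fin n → Fin n → ℝ)
    (hsymm₁ : ∀ i j k : Fin n, h i j k = h j i k)
    (hsymm₂ : ∀ i j k : Fin n, h i j k = h i k j) :
    3 * (∑ i : Fin n, ∑ j : Fin n, ∑ k : Fin n,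
        (h i j k) ^ 2 * ((lam k) ^ 2 - 2 * lam i * lam j)) ≤
      (Real.sqrt 17 + 1) / 2 * (∑ i : Fin n, (lam i) ^ 2) *
        (∑ i : Fin n, ∑ j : Fin n, ∑ k : Fin n, (h i j k) ^ 2) :=
  xi_pointwise_estimate_general (by positivity) sq_sqrt_seventeen_add_one_div_two.ge lam
    (fun i j k => sq_nonneg (h i j k)) fun i j k => by rw [hsymm₂ j k i, hsymm₁ j i k]
end

section
/- For all real numbers a, b, c with ab ≤ 0 and ac ≤ 0, one has (|ab| + |ac|)³ ≤ (a − b)²·a²·b² + (a − c)²·a²·c². -/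
section LinearOrderedCommRing

variable {R : Type*} [CommRing R] [LinearOrder R] [IsStrictOrderedRing R] {a b c : R}

theorem four_mul_abs_mul_le_sq_sub (hab : a * b ≤ 0) : 4 * |a * b| ≤ (a - b) ^ 2 :=
  calc
    4 * |a * b| = 4 * a * -b := by rw [abs_of_nonpos hab]; ring
    _ ≤ (a + -b) ^ 2 := four_mul_le_sq_add a (-b)
    _ = (a - b) ^ 2 := by rw [← sub_eq_add_neg]

theorem four_mul_abs_mul_pow_three_le (hab : a * b ≤ 0) :
    4 * |a * b| ^ 3 ≤ (a - b) ^ 2 * a ^ 2 * b ^ 2 :=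
  calc
    4 * |a * b| ^ 3 = 4 * |a * b| * |a * b| ^ 2 := by ring
    _ ≤ (a - b) ^ 2 * |a * b| ^ 2 := by gcongr; exact four_mul_abs_mul_le_sq_sub hab
    _ = (a - b) ^ 2 * a ^ 2 * b ^ 2 := by rw [sq_abs, mul_pow, mul_assoc]

theorem sum_abs_cube_bound_general (hab : a * b ≤ 0) (hac : a * c ≤ 0) :
    (|a * b| + |a * c|) ^ 3 ≤
      (a - b) ^ 2 * a ^ 2 * b ^ 2 + (a - c) ^ 2 * a ^ 2 * c ^ 2 :=
  calc
    (|a * b| + |a * c|) ^ 3 ≤ 2 ^ (3 - 1) * (|a * b| ^ 3 + |a * c| ^ 3) :=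
      add_pow_le (abs_nonneg _) (abs_nonneg _) 3
    _ = 4 * |a * b| ^ 3 + 4 * |a * c| ^ 3 := by ring
    _ ≤ (a - b) ^ 2 * a ^ 2 * b ^ 2 + (a - c) ^ 2 * a ^ 2 * c ^ 2 :=
      add_le_add (four_mul_abs_mul_pow_three_le hab) (four_mul_abs_mul_pow_three_le hac)

end LinearOrderedCommRing

theorem sum_abs_cube_bound (a b c : ℝ) (hab : a * b ≤ 0) (hac : a * c ≤ 0) :
    (|a * b| + |a * c|) ^ 3 ≤
      (a - b) ^ 2 * a ^ 2 * b ^ 2 + (a - c) ^ 2 * a ^ 2 * c ^ 2 :=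
  sum_abs_cube_bound_general hab hac
end

section
/- For all real numbers a, b, c, one has −(ab + bc + ca) ≤ ((a − b)²a²b² + (b − c)²b²c² + (c − a)²c²a²)^{1/3}, where the right-hand side is the real cube root of the (nonnegative) expression in parentheses. -/
/-!
Write `p = a + b + c`, `q = ab + bc + ca`, `r = abc` and
`D = (a - b)²a²b² + (b - c)²b²c² + (c - a)²c²a²`, so that
`2D = 2p²q² - 8q³ - 4p³r + 20pqr - 18r²`. The term `-4p³r` also occurs in the discriminant
`p²q² - 4q³ - 4p³r + 18pqr - 27r² = (a - b)²(b - c)²(c - a)²` of `(X - a)(X - b)(X - c)`, and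
subtracting this square leaves `p²q² + 2pqr + 9r² - 4q³ = (pq + r)² + 8r² - 4q³`.
Hence `D ≥ 2(-q)³`, which is even stronger than needed when `q ≤ 0`.
-/

section

variable {R : Type*} [CommRing R]

lemma two_mul_sum_sq_sub_mul_sq_mul_sq (a b c : R) :
    2 * ((a - b) ^ 2 * a ^ 2 * b ^ 2 + (b - c) ^ 2 * b ^ 2 * c ^ 2 +
        (c - a) ^ 2 * c ^ 2 * a ^ 2) =
      ((a - b) * (b - c) * (c - a)) ^ 2 +
        ((a + b + c) * (a * b + b * c + c * a) + a * b * c) ^ 2 +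
        8 * (a * b * c) ^ 2 + 4 * (-(a * b + b * c + c * a)) ^ 3 := by
  ring

lemma two_mul_neg_sum_products_cube_le [LinearOrder R] [IsStrictOrderedRing R] (a b c : R) :
    2 * (-(a * b + b * c + c * a)) ^ 3 ≤
      (a - b) ^ 2 * a ^ 2 * b ^ 2 + (b - c) ^ 2 * b ^ 2 * c ^ 2 +
        (c - a) ^ 2 * c ^ 2 * a ^ 2 := by
  linarith [two_mul_sum_sq_sub_mul_sq_mul_sq a b c, sq_nonneg ((a - b) * (b - c) * (c - a)),
    sq_nonneg ((a + b + c) * (a * b + b * c + c * a) + a * b * c), sq_nonneg (a * b * c)]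

end

theorem neg_sum_products_le_cube_root (a b c : ℝ) :
    -(a * b + b * c + c * a) ≤
      ((a - b) ^ 2 * a ^ 2 * b ^ 2 + (b - c) ^ 2 * b ^ 2 * c ^ 2 +
        (c - a) ^ 2 * c ^ 2 * a ^ 2) ^ ((1 : ℝ) / 3) := by
  rcases le_total (-(a * b + b * c + c * a)) 0 with hq | hq
  · exact hq.trans (by positivity)
  · rw [one_div, Real.le_rpow_inv_iff_of_pos hq (by positivity) three_pos, Real.rpow_ofNat]
    calc (-(a * b + b * c + c * a)) ^ 3
        ≤ 2 * (-(a * b + b * c + c * a)) ^ 3 :=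
          le_mul_of_one_le_left (pow_nonneg hq 3) one_le_two
      _ ≤ _ := two_mul_neg_sum_products_cube_le a b c
end

section
/- For all real numbers a and b, (−a² − 4ab)³ ≤ ζ(1 + √(3/2))^{−1}·(a − b)²·a²·b², where ζ(x) = x²(1 + x)²·(4x − 1)^{−3}. -/
noncomputable def zeta (x : ℝ) : ℝ := x ^ 2 * (1 + x) ^ 2 * ((4 * x - 1) ^ 3)⁻¹

/-!
By homogeneity, put `b = -x * a`: the claim becomes `ζ(c) * (4x - 1)³ ≤ x²(1 + x)²` with
`c = 1 + √(3/2)`. It is trivial for `x ≤ 1/4`, and for `x > 1/4` it says that `ζ` is minimal at `c`.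
The equation `ζ'(c) = 0` amounts to `2c² = 4c + 1`, so the difference of the two sides has a double
root at `x = c`; expanded in powers of `4x - 1`, the remaining quadratic factor has positive
coefficients.
-/

open Set

theorem zeta_pos {x : ℝ} (hx : 1 / 4 < x) : 0 < zeta x := by
  have ht : 0 < 4 * x - 1 := by linarith
  have hx₀ : 0 < x := by linarith
  exact mul_pos (mul_pos (pow_pos hx₀ 2) (by positivity)) (inv_pos.2 (pow_pos ht 3))

theorem zeta_mul_cube {x : ℝ} (hx : x ≠ 1 / 4) :
    zeta x * (4 * x - 1) ^ 3 = x ^ 2 * (1 + x) ^ 2 := by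
  have ht : 4 * x - 1 ≠ 0 := fun h ↦ hx (by linarith)
  exact inv_mul_cancel_right₀ (pow_ne_zero 3 ht) _

/- With `s = 4c - 1` and `t = 4x - 1` one has `256x²(1 + x)² = (t + 1)²(t + 5)²` and `s² = 6s + 15`.
The constant and linear terms in `t` force the coefficients of the quadratic factor. -/
theorem sixteen_mul_cross_sub_eq_of_critical {R : Type*} [CommRing R] {c : R}
    (hc : 2 * c ^ 2 = 4 * c + 1) (x : R) :
    16 * (x ^ 2 * (1 + x) ^ 2 * (4 * c - 1) ^ 3 - c ^ 2 * (1 + c) ^ 2 * (4 * x - 1) ^ 3) =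
      (x - c) ^ 2 * ((4 * c - 1) ^ 3 * (4 * x - 1) ^ 2 + (60 * (4 * c - 1) + 50) * (4 * x - 1) +
        25 * (4 * c - 1)) := by
  grind

theorem isMinOn_zeta_of_critical {c : ℝ} (hc₀ : 1 / 4 < c) (hc : 2 * c ^ 2 = 4 * c + 1) :
    IsMinOn zeta (Ioi (1 / 4)) c := by
  refine isMinOn_iff.2 fun x (hx : 1 / 4 < x) ↦ ?_
  have hs : 0 < 4 * c - 1 := by linarith
  have ht : 0 < 4 * x - 1 := by linarith
  have hfactor := sixteen_mul_cross_sub_eq_of_critical hc x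
  have hcross : c ^ 2 * (1 + c) ^ 2 * (4 * x - 1) ^ 3 ≤ x ^ 2 * (1 + x) ^ 2 * (4 * c - 1) ^ 3 := by
    have hnonneg : 0 ≤ (x - c) ^ 2 * ((4 * c - 1) ^ 3 * (4 * x - 1) ^ 2 +
        (60 * (4 * c - 1) + 50) * (4 * x - 1) + 25 * (4 * c - 1)) := by positivity
    linarith
  simpa only [zeta, div_eq_mul_inv] using
    (div_le_div_iff₀ (pow_pos hs 3) (pow_pos ht 3)).2 hcross

theorem mul_cube_le_of_le_zeta {m : ℝ} (hm : 0 ≤ m) (h : ∀ x > 1 / 4, m ≤ zeta x) (x : ℝ) :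
    m * (4 * x - 1) ^ 3 ≤ x ^ 2 * (1 + x) ^ 2 := by
  rcases le_or_gt x (1 / 4) with hx | hx
  · have hcube : (4 * x - 1) ^ 3 ≤ 0 := Odd.pow_nonpos (by decide) (by linarith)
    exact (mul_nonpos_of_nonneg_of_nonpos hm hcube).trans (by positivity)
  · have ht : 0 ≤ 4 * x - 1 := by linarith
    calc m * (4 * x - 1) ^ 3 ≤ zeta x * (4 * x - 1) ^ 3 := by gcongr; exact h x hx
      _ = x ^ 2 * (1 + x) ^ 2 := zeta_mul_cube hx.ne'

theorem mul_homogenized_cube_le_of_le_zeta {m : ℝ} (hm : 0 ≤ m) (h : ∀ x > 1 / 4, m ≤ zeta x)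
    (a b : ℝ) : m * (-a ^ 2 - 4 * a * b) ^ 3 ≤ (a - b) ^ 2 * a ^ 2 * b ^ 2 := by
  rcases eq_or_ne a 0 with rfl | ha
  · simp
  obtain ⟨x, rfl⟩ : ∃ x, b = -x * a := ⟨-b / a, by field_simp⟩
  calc m * (-a ^ 2 - 4 * a * (-x * a)) ^ 3 = a ^ 6 * (m * (4 * x - 1) ^ 3) := by ring
    _ ≤ a ^ 6 * (x ^ 2 * (1 + x) ^ 2) :=
      mul_le_mul_of_nonneg_left (mul_cube_le_of_le_zeta hm h x) (by positivity)
    _ = (a - -x * a) ^ 2 * a ^ 2 * (-x * a) ^ 2 := by ring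

theorem cube_bound_via_zeta (a b : ℝ) :
    (-a ^ 2 - 4 * a * b) ^ 3 ≤
      (zeta (1 + Real.sqrt (3 / 2)))⁻¹ * (a - b) ^ 2 * a ^ 2 * b ^ 2 := by
  have hs : Real.sqrt (3 / 2) ^ 2 = 3 / 2 := Real.sq_sqrt (by norm_num)
  have hc₀ : 1 / 4 < 1 + Real.sqrt (3 / 2) := by linarith [Real.sqrt_nonneg (3 / 2)]
  have hmin : IsMinOn zeta (Ioi (1 / 4)) (1 + Real.sqrt (3 / 2)) :=
    isMinOn_zeta_of_critical hc₀ (by linear_combination 2 * hs)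
  have hpos := zeta_pos hc₀
  have hbound := mul_homogenized_cube_le_of_le_zeta hpos.le (isMinOn_iff.1 hmin) a b
  simpa only [mul_assoc] using (le_inv_mul_iff₀ hpos).2 hbound
end

section
/- Let n ≥ 1, let λ : Fin n → ℝ, and let h : Fin n → Fin n → Fin n → Fin n → ℝ be symmetric in its first three arguments (h i j k l is invariant under all permutations of (i,j,k)) and satisfy the commutation relation h i j i j − h j i j i = λ_i·λ_j·(λ_i − λ_j) for all i, j. Then Σ_{i,j,k,l} (h i j k l)² ≥ (3/4)·Σ_{i,j} (λ_i − λ_j)²·λ_i²·λ_j². -/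
/-!
For `i ≠ j` the entries of `h` at the three distinct positions `(i, i, j, j)`, `(i, j, i, j)` and
`(j, i, i, j)` agree by symmetry, so `3 * ∑_{i ≠ j} (h i j i j)²` is at most the squared norm of
`h`. On the other hand, `(h i j i j - h j i j i)² ≤ 2 * ((h i j i j)² + (h j i j i)²)`, and summing
over `i ≠ j` makes the two terms on the right contribute equally.
-/

open Finset

section

variable {ι M : Type*} [Fintype ι] [DecidableEq ι]
  [AddCommMonoid M] [PartialOrder M] [IsOrderedAddMonoid M]

lemma sum_erase_add_add_le_sum {f : ι → ι → ι → M} (hf : ∀ i j k, 0 ≤ f i j k) (a : ι) :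
    ∑ i ∈ univ.erase a, (f a i i + (f i a i + f i i a)) ≤ ∑ i, ∑ j, ∑ k, f i j k := by
  have entry_le_row (i j k) : f i j k ≤ ∑ k', f i j k' :=
    single_le_sum (fun k' _ ↦ hf i j k') (mem_univ k)
  have row_nonneg (i j) : 0 ≤ ∑ k, f i j k := sum_nonneg fun k _ ↦ hf i j k
  have slice_a : ∑ i ∈ univ.erase a, f a i i ≤ ∑ j, ∑ k, f a j k :=
    (sum_le_sum fun i _ ↦ entry_le_row a i i).trans (sum_le_univ_sum_of_nonneg (row_nonneg a))
  have slice_of_ne {i} (hi : i ≠ a) : f i a i + f i i a ≤ ∑ j, ∑ k, f i j k :=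
    (add_le_add (entry_le_row i a i) (entry_le_row i i a)).trans
      (add_le_sum (fun j _ ↦ row_nonneg i j) (mem_univ a) (mem_univ i) hi.symm)
  rw [sum_add_distrib, ← add_sum_erase univ _ (mem_univ a)]
  exact add_le_add slice_a (sum_le_sum fun i hi ↦ slice_of_ne (ne_of_mem_erase hi))

end

section

variable {ι R : Type*} [Fintype ι] [CommRing R] [LinearOrder R] [IsStrictOrderedRing R]

lemma sum_sub_swap_sq_le_four_mul [DecidableEq ι] (A : ι → ι → R) :
    ∑ i, ∑ j, (A i j - A j i) ^ 2 ≤ 4 * ∑ j, ∑ i ∈ univ.erase j, A i j ^ 2 := by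
  have sub_sq_le (a b : R) : (a - b) ^ 2 ≤ 2 * (a ^ 2 + b ^ 2) := by
    simpa only [sub_eq_add_neg, neg_sq] using add_sq_le (a := a) (b := -b)
  have swap : ∑ j, ∑ i ∈ univ.erase j, A j i ^ 2 = ∑ j, ∑ i ∈ univ.erase j, A i j ^ 2 :=
    sum_comm' (by simp [ne_comm])
  calc ∑ i, ∑ j, (A i j - A j i) ^ 2
      = ∑ j, ∑ i ∈ univ.erase j, (A i j - A j i) ^ 2 := by
        rw [sum_comm]
        exact sum_congr rfl fun j _ ↦ (sum_erase univ (by simp)).symm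
    _ ≤ ∑ j, ∑ i ∈ univ.erase j, 2 * (A i j ^ 2 + A j i ^ 2) := by
        gcongr
        exact sub_sq_le _ _
    _ = 4 * ∑ j, ∑ i ∈ univ.erase j, A i j ^ 2 := by
        simp only [← mul_sum, sum_add_distrib, swap]
        ring

variable {h : ι → ι → ι → ι → R}

lemma three_mul_sum_erase_sq_le_sum_sq [DecidableEq ι] (hsymm₁ : ∀ i j k l, h i j k l = h j i k l)
    (hsymm₂ : ∀ i j k l, h i j k l = h i k j l) :
    3 * ∑ j, ∑ i ∈ univ.erase j, h i j i j ^ 2 ≤ ∑ i, ∑ j, ∑ k, ∑ l, h i j k l ^ 2 := by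
  calc 3 * ∑ l, ∑ i ∈ univ.erase l, h i l i l ^ 2
      = ∑ l, ∑ i ∈ univ.erase l, (h l i i l ^ 2 + (h i l i l ^ 2 + h i i l l ^ 2)) := by
        simp only [mul_sum]
        refine sum_congr rfl fun l _ ↦ sum_congr rfl fun i _ ↦ ?_
        rw [hsymm₁ l i i l, ← hsymm₂ i l i l]
        ring
    _ ≤ ∑ l, ∑ i, ∑ j, ∑ k, h i j k l ^ 2 :=
        sum_le_sum fun l _ ↦ sum_erase_add_add_le_sum (fun i j k ↦ sq_nonneg (h i j k l)) l
    _ = ∑ i, ∑ j, ∑ k, ∑ l, h i j k l ^ 2 := by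
        rw [sum_comm]
        exact sum_congr rfl fun i _ ↦ sum_comm_cycle.symm

theorem second_derivative_lower_bound_general (hsymm₁ : ∀ i j k l, h i j k l = h j i k l)
    (hsymm₂ : ∀ i j k l, h i j k l = h i k j l) :
    3 * ∑ i, ∑ j, (h i j i j - h j i j i) ^ 2 ≤ 4 * ∑ i, ∑ j, ∑ k, ∑ l, h i j k l ^ 2 := by
  classical
  calc 3 * ∑ i, ∑ j, (h i j i j - h j i j i) ^ 2
      ≤ 3 * (4 * ∑ j, ∑ i ∈ univ.erase j, h i j i j ^ 2) := by
        gcongr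
        exact sum_sub_swap_sq_le_four_mul fun i j ↦ h i j i j
    _ = 4 * (3 * ∑ j, ∑ i ∈ univ.erase j, h i j i j ^ 2) := mul_left_comm _ _ _
    _ ≤ 4 * ∑ i, ∑ j, ∑ k, ∑ l, h i j k l ^ 2 := by
        gcongr
        exact three_mul_sum_erase_sq_le_sum_sq hsymm₁ hsymm₂

end

theorem second_derivative_lower_bound (n : ℕ) (hn : 1 ≤ n) (lam : Fin n → ℝ)
    (h : Fin n → Fin n → Fin n → Fin n → ℝ)
    (hsymm₁ : ∀ i j k l : Fin n, h i j k l = h j i k l)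
    (hsymm₂ : ∀ i j k l : Fin n, h i j k l = h i k j l)
    (hcomm : ∀ i j : Fin n, h i j i j - h j i j i = lam i * lam j * (lam i - lam j)) :
    (3 / 4) * (∑ i : Fin n, ∑ j : Fin n,
        (lam i - lam j) ^ 2 * (lam i) ^ 2 * (lam j) ^ 2) ≤
      ∑ i : Fin n, ∑ j : Fin n, ∑ k : Fin n, ∑ l : Fin n, (h i j k l) ^ 2 := by
  have commutator_sq (i j) : (lam i - lam j) ^ 2 * lam i ^ 2 * lam j ^ 2 =
      (h i j i j - h j i j i) ^ 2 := by
    rw [hcomm]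
    ring
  simp only [commutator_sq]
  linarith [second_derivative_lower_bound_general hsymm₁ hsymm₂]
end
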